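/- Let E be a homogeneous effect algebra. (a) If M is an internally compatible subset of E, then the closure M̄ is an internally compatible set. (b) If M is a maximal internally compatible subset of E, then M = M̄. -/

import Mathlib

/-- An effect algebra: a partial commutative, associative operation `oplus`
(with definedness encoded via `Option`), constants `zero` and `one`,
unique orthosupplements, and `a ⊕ 1` defined only for `a = 0`. -/
structure EffectAlgebra (E : Type*) where
  oplus : E → E → Option E
  zero : E
  one : E
  comm : ∀ a b, oplus a b = oplus b a
  assoc : ∀ a b c ab abc, oplus a b = some ab → oplus ab c = some abc →
    ∃ bc, oplus b c = some bc ∧ oplus a bc = some abc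
  compl_exists : ∀ a, ∃ b, oplus a b = some one
  compl_unique : ∀ a b c, oplus a b = some one → oplus a c = some one → b = c
  add_one : ∀ a b, oplus a one = some b → a = zero

namespace EffectAlgebra

variable {E : Type*} (A : EffectAlgebra E)

/-- `a ⊥ b` : the sum `a ⊕ b` is defined. -/
def Perp (a b : E) : Prop := (A.oplus a b).isSome

/-- `a ≤ b` iff `b = a ⊕ c` for some `c`. -/
def le (a b : E) : Prop := ∃ c, A.oplus a c = some b

/-- The orthosupplement `a'`: the unique `b` with `a ⊕ b = 1`. -/
noncomputable def compl (a : E) : E :=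
  @Classical.epsilon E ⟨A.zero⟩ fun b => A.oplus a b = some A.one

/-- `a ⊖ b` : the unique `c` with `b ⊕ c = a` (defined when `b ≤ a`). -/
noncomputable def ominus (a b : E) : E :=
  @Classical.epsilon E ⟨A.zero⟩ fun c => A.oplus b c = some a

/-- Homogeneity. -/
def Homogeneous : Prop :=
  ∀ u v₁ v₂ s, A.oplus v₁ v₂ = some s → A.le u s → A.le u (A.compl s) →
    ∃ u₁ u₂, A.le u₁ v₁ ∧ A.le u₂ v₂ ∧ A.oplus u₁ u₂ = some u

/-- Riesz decomposition property. -/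
def RDP : Prop :=
  ∀ u v₁ v₂ s, A.oplus v₁ v₂ = some s → A.le u s →
    ∃ u₁ u₂, A.le u₁ v₁ ∧ A.le u₂ v₂ ∧ A.oplus u₁ u₂ = some u

/-- The sum `c₁ ⊕ … ⊕ cₙ` of a finite family (a list); `some s` iff the family
is orthogonal with sum `s`. -/
def sumList : List E → Option E
  | [] => some A.zero
  | x :: xs => (sumList xs).bind fun s => A.oplus x s

/-- The subfamily of `C` indexed by a set of indices `S ⊆ {1,…,n}`. -/
def pickList (C : List E) (S : Finset (Fin C.length)) : List E :=
  (S.sort (· ≤ ·)).map C.get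

/-- `C` is an orthogonal cover of `M`. -/
def IsCoverOf (C : List E) (M : Set E) : Prop :=
  (A.sumList C).isSome ∧
    ∀ a ∈ M, ∃ S : Finset (Fin C.length), A.sumList (pickList C S) = some a

/-- `M` is compatible with covers in `X`: every finite subset of `M` has an
orthogonal cover with range contained in `X`. -/
def CompatWithCoversIn (M X : Set E) : Prop :=
  ∀ F : Finset E, ↑F ⊆ M →
    ∃ C : List E, (∀ c ∈ C, c ∈ X) ∧ A.IsCoverOf C ↑F

/-- `M` is compatible (with covers in `E`). -/
def Compatible (M : Set E) : Prop := A.CompatWithCoversIn M Set.univ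

/-- `M` is internally compatible. -/
def InternallyCompatible (M : Set E) : Prop := A.CompatWithCoversIn M M

/-- `D` is a refinement of `C`: a partition `{P i}` of the index set of `D`
with `C i = ⊕_{j ∈ P i} D j`. -/
def IsRefinement (D C : List E) : Prop :=
  ∃ P : Fin C.length → Finset (Fin D.length),
    (∀ i j, i ≠ j → Disjoint (P i) (P j)) ∧
    (∀ k, ∃ i, k ∈ P i) ∧
    (∀ i, A.sumList (pickList D (P i)) = some (C.get i))

/-- One step of the closure construction `M ↦ M₁`. -/
def closureStep (M : Set E) : Set E :=
  {x | ∃ y ∈ M, A.le x y ∧ A.le x (A.compl y)} ∪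
  {z | ∃ y ∈ M, ∃ x, A.le x y ∧ A.le x (A.compl y) ∧ A.oplus x z = some y}

/-- The sets `Mₙ`. -/
def closureSeq (M : Set E) (n : ℕ) : Set E := (A.closureStep)^[n] M

/-- The closure `M̄ = ⋃ₙ Mₙ`. -/
def closure (M : Set E) : Set E := ⋃ n, A.closureSeq M n

/-- `B` is a sub-effect algebra of `E`. -/
def IsSubEA (B : Set E) : Prop :=
  A.one ∈ B ∧ ∀ a ∈ B, ∀ b ∈ B, A.le b a → A.ominus a b ∈ B

/-- The Riesz decomposition property for (the effect algebra on) a subset `B`. -/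
def RDPOn (B : Set E) : Prop :=
  ∀ u v₁ v₂ s, u ∈ B → v₁ ∈ B → v₂ ∈ B → A.oplus v₁ v₂ = some s → A.le u s →
    ∃ u₁ u₂, u₁ ∈ B ∧ u₂ ∈ B ∧ A.le u₁ v₁ ∧ A.le u₂ v₂ ∧ A.oplus u₁ u₂ = some u

/-- Homogeneity for (the effect algebra on) a subset `B`. -/
def HomogeneousOn (B : Set E) : Prop :=
  ∀ u v₁ v₂ s, u ∈ B → v₁ ∈ B → v₂ ∈ B → A.oplus v₁ v₂ = some s →
    A.le u s → A.le u (A.compl s) →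
    ∃ u₁ u₂, u₁ ∈ B ∧ u₂ ∈ B ∧ A.le u₁ v₁ ∧ A.le u₂ v₂ ∧ A.oplus u₁ u₂ = some u

/-- A block: a maximal sub-effect algebra satisfying the Riesz decomposition
property. -/
def IsBlock (B : Set E) : Prop :=
  A.IsSubEA B ∧ A.RDPOn B ∧
    ∀ B', A.IsSubEA B' → A.RDPOn B' → B ⊆ B' → B' = B

/-- A block of the sub-effect algebra on `F`: a maximal sub-effect algebra of
`F` satisfying the Riesz decomposition property. -/
def IsBlockIn (F B : Set E) : Prop :=
  B ⊆ F ∧ A.IsSubEA B ∧ A.RDPOn B ∧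
    ∀ B', B' ⊆ F → A.IsSubEA B' → A.RDPOn B' → B ⊆ B' → B' = B

/-- `a` is sharp: the infimum `a ∧ a'` exists and equals `0`, i.e. every common
lower bound of `a` and `a'` is `0`. -/
def Sharp (a : E) : Prop :=
  ∀ b, A.le b a → A.le b (A.compl a) → b = A.zero

/-- `a` is sharp in the sub-effect algebra on `F`. -/
def SharpIn (F : Set E) (a : E) : Prop :=
  a ∈ F ∧ ∀ b ∈ F, A.le b a → A.le b (A.compl a) → b = A.zero

/-- `a` is principal. -/
def Principal (a : E) : Prop :=
  ∀ x y s, A.le x a → A.le y a → A.oplus x y = some s → A.le s a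

/-- `a` is principal in the sub-effect algebra on `B`. -/
def PrincipalIn (B : Set E) (a : E) : Prop :=
  a ∈ B ∧ ∀ x ∈ B, ∀ y ∈ B, ∀ s, A.le x a → A.le y a →
    A.oplus x y = some s → A.le s a

/-- `a` is central: principal, and every `b` has a unique decomposition
`b = b₁ ⊕ b₂` with `b₁ ≤ a`, `b₂ ≤ a'`. -/
def Central (a : E) : Prop :=
  A.Principal a ∧ ∀ b, ∃! p : E × E,
    A.le p.1 a ∧ A.le p.2 (A.compl a) ∧ A.oplus p.1 p.2 = some b

/-- `a` is central in the sub-effect algebra on `B`. -/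
def CentralIn (B : Set E) (a : E) : Prop :=
  A.PrincipalIn B a ∧ ∀ b ∈ B, ∃! p : E × E,
    p.1 ∈ B ∧ p.2 ∈ B ∧ A.le p.1 a ∧ A.le p.2 (A.compl a) ∧
      A.oplus p.1 p.2 = some b

/-- The center `C(E)`. -/
def center : Set E := {a | A.Central a}

/-- The compatibility center `K(E)`: the intersection of all blocks. -/
def compatCenter : Set E := {x | ∀ B, A.IsBlock B → x ∈ B}

end EffectAlgebra

/-!
Let `C` be an orthogonal cover of a finite set, let `y` be the sum of a subfamily `c₁, …, cₖ` of
`C`, and let `x ≤ y, y'`. Homogeneity, applied repeatedly, splits `x = u₁ ⊕ … ⊕ uₖ` with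
`uᵢ ⊕ vᵢ = cᵢ`. Replacing each `cᵢ` by the pair `uᵢ, vᵢ` refines `C` to an orthogonal family that
still covers everything `C` did and in addition covers `x = ⨁ uᵢ` and `y ⊖ x = ⨁ vᵢ`. Since
`uᵢ ≤ x ≤ y' ≤ cᵢ'`, the new members come from the `cᵢ` by one closure step, so the refined cover
stays inside any set that is stable under closure steps, such as the closure of `M`.
-/

namespace EffectAlgebra

variable {E : Type*} (A : EffectAlgebra E)

protected theorem oplus_zero (a : E) : A.oplus a A.zero = some a := by
  obtain ⟨z, hz⟩ := A.compl_exists A.one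
  obtain rfl : z = A.zero := A.add_one z A.one (by rwa [A.comm])
  obtain ⟨b, hb⟩ := A.compl_exists a
  rw [A.comm] at hb
  obtain ⟨s, has, hbs⟩ := A.assoc _ _ _ _ _ hb hz
  rw [has, A.compl_unique _ _ _ hbs hb]

protected theorem zero_oplus (a : E) : A.oplus A.zero a = some a := by
  rw [A.comm, A.oplus_zero]

theorem oplus_bind_assoc (a b c : E) :
    (A.oplus a b).bind (A.oplus · c) = (A.oplus b c).bind (A.oplus a) := by
  ext s
  simp only [Option.bind_eq_some_iff]
  constructor
  · rintro ⟨ab, hab, hs⟩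
    exact A.assoc _ _ _ _ _ hab hs
  · rintro ⟨bc, hbc, hs⟩
    rw [A.comm] at hbc hs
    obtain ⟨ba, hba, hs'⟩ := A.assoc _ _ _ _ _ hbc hs
    exact ⟨ba, by rwa [A.comm], by rwa [A.comm]⟩

variable {A}

theorem oplus_left_cancel {a b c s : E} (hb : A.oplus a b = some s) (hc : A.oplus a c = some s) :
    b = c := by
  obtain ⟨s', hs'⟩ := A.compl_exists s
  rw [A.comm] at hb hc
  obtain ⟨t, hat, hbt⟩ := A.assoc _ _ _ _ _ hb hs'
  obtain ⟨t', hat', hct⟩ := A.assoc _ _ _ _ _ hc hs'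
  obtain rfl : t = t' := Option.some.inj (hat.symm.trans hat')
  rw [A.comm] at hbt hct
  exact A.compl_unique _ _ _ hbt hct

theorem le_of_oplus_left {a b s : E} (h : A.oplus a b = some s) : A.le a s := ⟨b, h⟩

theorem le_of_oplus_right {a b s : E} (h : A.oplus a b = some s) : A.le b s :=
  ⟨a, by rwa [A.comm]⟩

protected theorem le.trans {a b c : E} (hab : A.le a b) (hbc : A.le b c) : A.le a c := by
  obtain ⟨d, hd⟩ := hab
  obtain ⟨e, he⟩ := hbc
  obtain ⟨s, -, hs⟩ := A.assoc _ _ _ _ _ hd he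
  exact ⟨s, hs⟩

variable (A) in
protected theorem zero_le (a : E) : A.le A.zero a := ⟨a, A.zero_oplus a⟩

theorem eq_zero_of_le_zero {a : E} (h : A.le a A.zero) : a = A.zero := by
  obtain ⟨b, hab⟩ := h
  obtain ⟨s, hb, -⟩ := A.assoc _ _ _ _ _ hab (A.zero_oplus A.one)
  obtain rfl : b = A.zero := A.add_one _ _ hb
  rw [A.oplus_zero] at hab
  exact Option.some.inj hab

variable (A) in
theorem oplus_compl (a : E) : A.oplus a (A.compl a) = some A.one :=
  Classical.epsilon_spec (A.compl_exists a)

theorem le.compl_le_compl {a b : E} (h : A.le a b) : A.le (A.compl b) (A.compl a) := by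
  obtain ⟨d, hd⟩ := h
  obtain ⟨s, hds, has⟩ := A.assoc _ _ _ _ _ hd (A.oplus_compl b)
  rw [A.compl_unique _ _ _ (A.oplus_compl a) has]
  exact le_of_oplus_right hds

variable (A) in
/-- The partial sum extended to `Option E`, where `none` stands for an undefined value and absorbs
everything. -/
def optionAdd (a b : Option E) : Option E := a.bind fun x => b.bind fun y => A.oplus x y

theorem optionAdd_eq_some_iff {a b : Option E} {s : E} :
    A.optionAdd a b = some s ↔ ∃ x y, a = some x ∧ b = some y ∧ A.oplus x y = some s := by
  simp only [optionAdd, Option.bind_eq_some_iff, exists_and_left]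

variable (A) in
/-- The commutative monoid `(Option E, optionAdd)`, which makes the library's lemmas on sums of
lists available for `sumList`. It cannot be an instance because it depends on `A`. -/
abbrev optionAddCommMonoid : AddCommMonoid (Option E) where
  add := A.optionAdd
  zero := some A.zero
  add_assoc a b c := by
    change A.optionAdd (A.optionAdd a b) c = A.optionAdd a (A.optionAdd b c)
    cases a <;> cases b <;> cases c <;> simp [optionAdd, oplus_bind_assoc]
  zero_add a := by
    change A.optionAdd (some A.zero) a = a
    cases a <;> simp [optionAdd, A.zero_oplus]
  add_zero a := by
    change A.optionAdd a (some A.zero) = a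
    cases a <;> simp [optionAdd, A.oplus_zero]
  add_comm a b := by
    change A.optionAdd a b = A.optionAdd b a
    cases a <;> cases b <;> simp [optionAdd, A.comm]
  nsmul := @nsmulRec _ ⟨some A.zero⟩ ⟨A.optionAdd⟩

theorem sumList_eq_sum (l : List E) :
    letI := A.optionAddCommMonoid
    A.sumList l = (l.map some).sum := by
  let := A.optionAddCommMonoid
  induction l with
  | nil => rfl
  | cons c l ih =>
    rw [List.map_cons, List.sum_cons, ← ih]
    rfl

theorem sumList_cons_eq_some_iff {c s : E} {l : List E} :
    A.sumList (c :: l) = some s ↔ ∃ t, A.sumList l = some t ∧ A.oplus c t = some s :=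
  Option.bind_eq_some_iff

theorem sumList_append (l r : List E) :
    A.sumList (l ++ r) = A.optionAdd (A.sumList l) (A.sumList r) := by
  let := A.optionAddCommMonoid
  simp only [sumList_eq_sum, List.map_append, List.sum_append]
  rfl

theorem sumList_eq_of_perm {l l' : List E} (h : l.Perm l') : A.sumList l = A.sumList l' := by
  let := A.optionAddCommMonoid
  simpa only [sumList_eq_sum] using (h.map some).sum_eq

theorem le_of_mem_of_sumList_eq_some {l : List E} {c s : E} (hs : A.sumList l = some s)
    (hc : c ∈ l) : A.le c s := by
  obtain ⟨l₁, l₂, rfl⟩ := List.append_of_mem hc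
  rw [sumList_eq_of_perm List.perm_middle, sumList_cons_eq_some_iff] at hs
  obtain ⟨t, -, ht⟩ := hs
  exact le_of_oplus_left ht

variable (A) in
/-- `a` is the sum of a subfamily of `C`. Subfamilies are lists contained in `C` up to order rather
than sets of indices, so that the notion is visibly invariant under permutations of `C`. -/
def IsSubsum (C : List E) (a : E) : Prop := ∃ l, l.Subperm C ∧ A.sumList l = some a

theorem exists_pickList_eq_iff_sublist {C l : List E} :
    (∃ S : Finset (Fin C.length), pickList C S = l) ↔ l.Sublist C := by
  constructor
  · rintro ⟨S, rfl⟩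
    exact List.map_getElem_sublist (Finset.sortedLT_sort S).pairwise
  · intro hl
    obtain ⟨is, rfl, his⟩ := List.sublist_eq_map_getElem hl
    have hsort : is.toFinset.sort (· ≤ ·) = is :=
      (List.toFinset_sort _ his.nodup).2 (his.imp le_of_lt)
    exact ⟨is.toFinset, congrArg (List.map C.get) hsort⟩

theorem isSubsum_iff_exists_pickList {C : List E} {a : E} :
    A.IsSubsum C a ↔ ∃ S : Finset (Fin C.length), A.sumList (pickList C S) = some a := by
  constructor
  · rintro ⟨l, ⟨l', hperm, hsub⟩, hl⟩
    obtain ⟨S, rfl⟩ := exists_pickList_eq_iff_sublist.2 hsub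
    exact ⟨S, by rw [sumList_eq_of_perm hperm, hl]⟩
  · rintro ⟨S, hS⟩
    exact ⟨_, (exists_pickList_eq_iff_sublist.1 ⟨S, rfl⟩).subperm, hS⟩

theorem isCoverOf_iff_isSubsum {C : List E} {M : Set E} :
    A.IsCoverOf C M ↔ (A.sumList C).isSome ∧ ∀ a ∈ M, A.IsSubsum C a := by
  simp only [IsCoverOf, isSubsum_iff_exists_pickList]

theorem IsSubsum.of_perm {C D : List E} {a : E} (ha : A.IsSubsum C a) (h : C.Perm D) :
    A.IsSubsum D a := by
  obtain ⟨l, hl, hla⟩ := ha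
  exact ⟨l, hl.trans h.subperm, hla⟩

theorem IsSubsum.exists_perm_append {C : List E} {a : E} (ha : A.IsSubsum C a) :
    ∃ l r, C.Perm (l ++ r) ∧ A.sumList l = some a := by
  obtain ⟨l, ⟨l', hperm, hsub⟩, hl⟩ := ha
  obtain ⟨r, hr⟩ := hsub.exists_perm_append
  exact ⟨l, r, hr.trans (hperm.append_right r), hl⟩

variable (A) in
/-- The pairs in `P` split the members of `l` one by one: the `i`-th member of `l` is the sum of the
`i`-th pair. -/
def IsSplitting (P : List (E × E)) (l : List E) : Prop :=
  P.map (fun p => A.oplus p.1 p.2) = l.map some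

/-- The family of all components of the pairs in `P`; it refines any list that `P` splits. -/
def components (P : List (E × E)) : List E := P.map Prod.fst ++ P.map Prod.snd

theorem mem_components_iff {P : List (E × E)} {a : E} :
    a ∈ components P ↔ ∃ p ∈ P, a = p.1 ∨ a = p.2 := by
  simp only [components, List.mem_append, List.mem_map]
  grind

namespace IsSplitting

variable {P : List (E × E)} {l : List E}

theorem exists_mem (hP : A.IsSplitting P l) {p : E × E} (hp : p ∈ P) :
    ∃ c ∈ l, A.oplus p.1 p.2 = some c := by
  have hmem : A.oplus p.1 p.2 ∈ l.map some := hP ▸ List.mem_map_of_mem hp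
  obtain ⟨c, hc, hpc⟩ := List.mem_map.1 hmem
  exact ⟨c, hc, hpc.symm⟩

theorem sumList_components (hP : A.IsSplitting P l) : A.sumList (components P) = A.sumList l := by
  let := A.optionAddCommMonoid
  calc A.sumList (components P)
      = (P.map fun p => some p.1).sum + (P.map fun p => some p.2).sum := by
        simp only [sumList_eq_sum, components, List.map_append, List.sum_append, List.map_map,
          Function.comp_def]
    _ = (P.map fun p => A.oplus p.1 p.2).sum := List.sum_map_add.symm
    _ = A.sumList l := by rw [hP, sumList_eq_sum]

theorem exists_of_sublist (hP : A.IsSplitting P l) {l' : List E} (hl' : l'.Sublist l) :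
    ∃ P', P'.Sublist P ∧ A.IsSplitting P' l' := by
  have hsub := hl'.map some
  rw [← hP] at hsub
  obtain ⟨P', hP', heq⟩ := List.sublist_map_iff.1 hsub
  exact ⟨P', hP', heq.symm⟩

theorem isSubsum_components_append (hP : A.IsSplitting P l) {r : List E} {a : E}
    (ha : A.IsSubsum (l ++ r) a) : A.IsSubsum (components P ++ r) a := by
  obtain ⟨k, ⟨k', hperm, hsub⟩, hk⟩ := ha
  obtain ⟨l', r', rfl, hl', hr'⟩ := List.sublist_append_iff.1 hsub
  obtain ⟨P', hP', hsplit⟩ := hP.exists_of_sublist hl'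
  refine ⟨components P' ++ r', List.Sublist.subperm ?_, ?_⟩
  · exact ((hP'.map _).append (hP'.map _)).append hr'
  · rw [sumList_append, hsplit.sumList_components, ← sumList_append, sumList_eq_of_perm hperm, hk]

theorem sumList_map_snd (hP : A.IsSplitting P l) {x y z : E} (hl : A.sumList l = some y)
    (hx : A.sumList (P.map Prod.fst) = some x) (hz : A.oplus x z = some y) :
    A.sumList (P.map Prod.snd) = some z := by
  rw [← hP.sumList_components, components, sumList_append, optionAdd_eq_some_iff] at hl
  obtain ⟨x', z', hx', hz', hy⟩ := hl
  obtain rfl : x = x' := Option.some.inj (hx.symm.trans hx')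
  rw [hz', oplus_left_cancel hy hz]

end IsSplitting

theorem Homogeneous.exists_isSplitting (hH : A.Homogeneous) {l : List E} {x y : E}
    (hl : A.sumList l = some y) (hxy : A.le x y) (hxy' : A.le x (A.compl y)) :
    ∃ P, A.IsSplitting P l ∧ A.sumList (P.map Prod.fst) = some x := by
  induction l generalizing x y with
  | nil =>
    obtain rfl : A.zero = y := Option.some.inj hl
    obtain rfl : x = A.zero := eq_zero_of_le_zero hxy
    exact ⟨[], rfl, rfl⟩
  | cons c l ih =>
    obtain ⟨s, hs, hcs⟩ := sumList_cons_eq_some_iff.1 hl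
    obtain ⟨u, t, ⟨v, huv⟩, hts, hut⟩ := hH x c s y hcs hxy hxy'
    have hts' : A.le t (A.compl s) :=
      ((le_of_oplus_right hut).trans hxy').trans (le_of_oplus_right hcs).compl_le_compl
    obtain ⟨P, hP, hPt⟩ := ih hs hts hts'
    refine ⟨(u, v) :: P, ?_, sumList_cons_eq_some_iff.2 ⟨t, hPt, hut⟩⟩
    rw [IsSplitting, List.map_cons, List.map_cons, huv, hP]

theorem mem_closureStep_iff {N : Set E} {a : E} :
    a ∈ A.closureStep N ↔
      ∃ y ∈ N, ∃ x z, A.oplus x z = some y ∧ A.le x (A.compl y) ∧ (a = x ∨ a = z) := by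
  constructor
  · rintro (⟨y, hy, ⟨z, hz⟩, hx'⟩ | ⟨y, hy, x, -, hx', hz⟩)
    · exact ⟨y, hy, a, z, hz, hx', Or.inl rfl⟩
    · exact ⟨y, hy, x, a, hz, hx', Or.inr rfl⟩
  · rintro ⟨y, hy, x, z, hz, hx', rfl | rfl⟩
    · exact Or.inl ⟨y, hy, le_of_oplus_left hz, hx'⟩
    · exact Or.inr ⟨y, hy, x, le_of_oplus_left hz, hx', hz⟩

theorem closureStep_mono : Monotone A.closureStep := by
  intro N N' hNN' a ha
  rw [mem_closureStep_iff] at ha ⊢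
  obtain ⟨y, hy, h⟩ := ha
  exact ⟨y, hNN' hy, h⟩

theorem subset_closureStep (N : Set E) : N ⊆ A.closureStep N := fun y hy =>
  mem_closureStep_iff.2 ⟨y, hy, A.zero, y, A.zero_oplus y, A.zero_le _, Or.inr rfl⟩

theorem closureSeq_succ (M : Set E) (n : ℕ) :
    A.closureSeq M (n + 1) = A.closureStep (A.closureSeq M n) :=
  Function.iterate_succ_apply' _ _ _

theorem closureSeq_mono (M : Set E) : Monotone (A.closureSeq M) :=
  monotone_nat_of_le_succ fun n => closureSeq_succ (A := A) M n ▸ subset_closureStep _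

theorem subset_closure (M : Set E) : M ⊆ A.closure M := Set.subset_iUnion (A.closureSeq M) 0

theorem closureStep_closure_subset (M : Set E) : A.closureStep (A.closure M) ⊆ A.closure M := by
  intro a ha
  obtain ⟨y, hy, h⟩ := mem_closureStep_iff.1 ha
  obtain ⟨n, hn⟩ := Set.mem_iUnion.1 hy
  refine Set.mem_iUnion.2 ⟨n + 1, ?_⟩
  rw [closureSeq_succ]
  exact mem_closureStep_iff.2 ⟨y, hn, h⟩

theorem IsSplitting.mem_closureStep_of_mem_components {P : List (E × E)} {l : List E} {a x y : E}
    (hP : A.IsSplitting P l) (hl : A.sumList l = some y)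
    (hx : A.sumList (P.map Prod.fst) = some x) (hxy' : A.le x (A.compl y))
    (ha : a ∈ components P) : a ∈ A.closureStep {c | c ∈ l} := by
  obtain ⟨p, hp, hap⟩ := mem_components_iff.1 ha
  obtain ⟨c, hc, hpc⟩ := hP.exists_mem hp
  have hpx : A.le p.1 x := le_of_mem_of_sumList_eq_some hx (List.mem_map_of_mem hp)
  have hcy : A.le c y := le_of_mem_of_sumList_eq_some hl hc
  exact mem_closureStep_iff.2
    ⟨c, hc, p.1, p.2, hpc, (hpx.trans hxy').trans hcy.compl_le_compl, hap⟩

section Covers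

variable {X : Set E}

theorem Homogeneous.exists_isCoverOf_insert (hH : A.Homogeneous) (hX : A.closureStep X ⊆ X)
    {C : List E} {G : Set E} {a : E} (hCX : ∀ c ∈ C, c ∈ X) (hC : A.IsCoverOf C G)
    (ha : a ∈ A.closureStep G) : ∃ D : List E, (∀ d ∈ D, d ∈ X) ∧ A.IsCoverOf D (insert a G) := by
  obtain ⟨hCsum, hCG⟩ := isCoverOf_iff_isSubsum.1 hC
  obtain ⟨y, hy, x, z, hz, hxy', hxz⟩ := mem_closureStep_iff.1 ha
  obtain ⟨l, r, hr, hl⟩ := (hCG y hy).exists_perm_append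
  have hlX : {c | c ∈ l} ⊆ X := fun c hc => hCX c (hr.mem_iff.2 (List.mem_append_left r hc))
  obtain ⟨P, hP, hx⟩ := hH.exists_isSplitting hl (le_of_oplus_left hz) hxy'
  refine ⟨components P ++ r, fun d hd => ?_, isCoverOf_iff_isSubsum.2 ⟨?_, ?_⟩⟩
  · rcases List.mem_append.1 hd with hdP | hdr
    · exact hX (closureStep_mono hlX (hP.mem_closureStep_of_mem_components hl hx hxy' hdP))
    · exact hCX d (hr.mem_iff.2 (List.mem_append_right l hdr))
  · rwa [sumList_append, hP.sumList_components, ← sumList_append, ← sumList_eq_of_perm hr]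
  · rintro b (rfl | hb)
    · have hsub : (components P).Sublist (components P ++ r) := List.sublist_append_left _ _
      rcases hxz with rfl | rfl
      · exact ⟨_, ((List.sublist_append_left _ _).trans hsub).subperm, hx⟩
      · exact ⟨_, ((List.sublist_append_right _ _).trans hsub).subperm, hP.sumList_map_snd hl hx hz⟩
    · exact hP.isSubsum_components_append ((hCG b hb).of_perm hr)

theorem Homogeneous.exists_isCoverOf_union (hH : A.Homogeneous) (hX : A.closureStep X ⊆ X)
    {C : List E} {F G : Set E} (hCX : ∀ c ∈ C, c ∈ X) (hC : A.IsCoverOf C G) (hF : F.Finite)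
    (hFG : F ⊆ A.closureStep G) : ∃ D : List E, (∀ d ∈ D, d ∈ X) ∧ A.IsCoverOf D (F ∪ G) := by
  induction F, hF using Set.Finite.induction_on with
  | empty => exact ⟨C, hCX, by rwa [Set.empty_union]⟩
  | @insert a F _ _ ih =>
    obtain ⟨haG, hFG⟩ := Set.insert_subset_iff.1 hFG
    obtain ⟨D, hDX, hD⟩ := ih hFG
    rw [Set.insert_union]
    exact hH.exists_isCoverOf_insert hX hDX hD (closureStep_mono Set.subset_union_right haG)

theorem exists_finset_subset_closureStep {N : Set E} {F : Finset E}
    (hF : ↑F ⊆ A.closureStep N) : ∃ G : Finset E, ↑G ⊆ N ∧ ↑F ⊆ A.closureStep (G : Set E) := by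
  classical
  choose! y hyN hy using fun a (ha : a ∈ F) => mem_closureStep_iff.1 (hF ha)
  refine ⟨F.image y, ?_, fun a ha => ?_⟩
  · simpa [Set.subset_def] using hyN
  · exact mem_closureStep_iff.2 ⟨y a, Finset.mem_coe.2 (Finset.mem_image_of_mem y ha), hy a ha⟩

theorem CompatWithCoversIn.closureStep {N : Set E} (hN : A.CompatWithCoversIn N X)
    (hH : A.Homogeneous) (hX : A.closureStep X ⊆ X) :
    A.CompatWithCoversIn (A.closureStep N) X := by
  intro F hF
  obtain ⟨G, hGN, hFG⟩ := exists_finset_subset_closureStep hF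
  obtain ⟨C, hCX, hC⟩ := hN G hGN
  obtain ⟨D, hDX, hDsum, hD⟩ := hH.exists_isCoverOf_union hX hCX hC F.finite_toSet hFG
  exact ⟨D, hDX, hDsum, fun a ha => hD a (Or.inl ha)⟩

theorem CompatWithCoversIn.closureSeq {M : Set E} (hM : A.CompatWithCoversIn M X)
    (hH : A.Homogeneous) (hX : A.closureStep X ⊆ X) (n : ℕ) :
    A.CompatWithCoversIn (A.closureSeq M n) X := by
  induction n with
  | zero => exact hM
  | succ n ih =>
    rw [closureSeq_succ]
    exact ih.closureStep hH hX

theorem CompatWithCoversIn.closure {M : Set E} (hM : A.CompatWithCoversIn M X)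
    (hH : A.Homogeneous) (hX : A.closureStep X ⊆ X) : A.CompatWithCoversIn (A.closure M) X := by
  intro F hF
  obtain ⟨n, hFn⟩ : ∃ n, (F : Set E) ⊆ A.closureSeq M n :=
    (closureSeq_mono M).directed_le.exists_mem_subset_of_finset_subset_biUnion hF
  exact hM.closureSeq hH hX n F hFn

theorem CompatWithCoversIn.mono_right {M Y : Set E} (hM : A.CompatWithCoversIn M X) (hXY : X ⊆ Y) :
    A.CompatWithCoversIn M Y := by
  intro F hF
  obtain ⟨C, hCX, hC⟩ := hM F hF
  exact ⟨C, fun c hc => hXY (hCX c hc), hC⟩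

end Covers

theorem InternallyCompatible.closure {M : Set E} (hM : A.InternallyCompatible M)
    (hH : A.Homogeneous) : A.InternallyCompatible (A.closure M) :=
  (CompatWithCoversIn.mono_right hM (subset_closure M)).closure hH (closureStep_closure_subset M)

end EffectAlgebra

/-- (a) the closure of an internally compatible set is internally
compatible; (b) a maximal internally compatible set is closed. -/
theorem internally_compatible_closure {E : Type*} (A : EffectAlgebra E)
    (hH : A.Homogeneous) :
    (∀ M : Set E, A.InternallyCompatible M →
      A.InternallyCompatible (A.closure M)) ∧
    (∀ M : Set E, A.InternallyCompatible M →
      (∀ N : Set E, A.InternallyCompatible N → M ⊆ N → M = N) →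
      M = A.closure M) := by
  refine ⟨fun M hM => hM.closure hH, fun M hM hmax => ?_⟩
  exact hmax (A.closure M) (hM.closure hH) (EffectAlgebra.subset_closure M)
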